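/- In the control construction, for every α : X → Bool and β : Y → Bool, if ψ[α∪β] is false, then the ballot J*_{α,β} on the subagenda Φ''_α is rational and has cumulative Hamming distance Dist(J*_{α,β}, J⃗|_{Φ''_α}) = 3m + 2 + 3u to the restricted profile J⃗|_{Φ''_α}. -/

import Mathlib

/-!
Extended constraint-based judgment aggregation: the control construction.
The full set Φ of issues is an inductive type; subagendas are `Finset`s of issues;
a ballot on a subagenda Ψ is a function `↥Ψ → Bool`, and it is rational if it extends
to a ballot on all of Φ satisfying the integrity constraint Γ.
-/

namespace Ctrl

/-- The full set Φ of issues of the control construction. -/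
inductive Issue (n m : ℕ) : Type
  | x : Fin n → Issue n m
  | x' : Fin n → Issue n m
  | y : Fin m → Issue n m
  | y' : Fin m → Issue n m
  | t : Fin m → Issue n m
  | a : Issue n m
  | b : Issue n m
  | u : Fin 3 → Fin (10 * n + 10 * m + 10) → Issue n m
  deriving DecidableEq, Fintype

variable {n m : ℕ}

/-- Hamming distance between two ballots on a (sub)agenda. -/
def hamming {I : Type*} [Fintype I] (r r' : I → Bool) : ℕ :=
  (Finset.univ.filter (fun i => r i ≠ r' i)).card

def bigA (r : Issue n m → Bool) : Prop := ∀ i, r (.x i) ≠ r (.x' i)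
def bigB (r : Issue n m → Bool) : Prop := ∀ j, r (.y j) ≠ r (.y' j)
def bigT (r : Issue n m → Bool) : Prop := ∀ j, r (.t j) = true

/-- The part Γ₀ of the integrity constraint. -/
def gamma0 (psi : (Fin n → Bool) → (Fin m → Bool) → Bool) (r : Issue n m → Bool) : Prop :=
  (r .a = true ∨ r .b = true) ∧ (r .a = false ∨ r .b = false) ∧
  (bigB r ∨ bigT r) ∧
  (bigA r →
    ((bigB r ∧ r .a = true ∧ psi (fun i => r (.x i)) (fun j => r (.y j)) = false) ∨
     (r .b = true ∧ ∀ j, r (.t j) = true ∧ r (.y j) = false ∧ r (.y' j) = false)))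

/-- The integrity constraint `Γ = Γ₀ ∨ ⋁_{i∈[3]} ⋀_{ℓ∈[u]} u_{i,ℓ}` on full ballots. -/
def Gamma (psi : (Fin n → Bool) → (Fin m → Bool) → Bool) (r : Issue n m → Bool) : Prop :=
  gamma0 psi r ∨ ∃ i : Fin 3, ∀ ℓ, r (.u i ℓ) = true

/-- A ballot on a subagenda Ψ is rational if it extends to a truth assignment of all
of Φ that satisfies Γ. -/
def rationalOn (psi : (Fin n → Bool) → (Fin m → Bool) → Bool)
    (Ψ : Finset (Issue n m)) (r : ↥Ψ → Bool) : Prop :=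
  ∃ r' : Issue n m → Bool, (∀ i : ↥Ψ, r' i.1 = r i) ∧ Gamma psi r'

/-- The restriction of a full ballot to a subagenda Ψ. -/
def restrict (Ψ : Finset (Issue n m)) (J : Issue n m → Bool) : ↥Ψ → Bool :=
  fun i => J i.1

/-- The profile J⃗ = (J₁, J₂, J₃): the ballot J_{k+1} sets all x- and x'-issues and
the issues u_{k+1,ℓ} to true, J₃ additionally sets a to true, and all other issues
are set to false. -/
def Jp (k : Fin 3) : Issue n m → Bool := fun i => match i with
  | .x _ => true
  | .x' _ => true
  | .u k' _ => k' == k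
  | .a => k == 2
  | _ => false

/-- Cumulative Hamming distance of a ballot on a subagenda Ψ to the restricted
profile J⃗|_Ψ. -/
def DistOn (Ψ : Finset (Issue n m)) (r : ↥Ψ → Bool) : ℕ :=
  hamming r (restrict Ψ (Jp 0)) + hamming r (restrict Ψ (Jp 1)) +
    hamming r (restrict Ψ (Jp 2))

/-- Membership in the set of Kemeny outcomes of the restricted profile J⃗|_Ψ:
a rational ballot on Ψ minimizing the cumulative Hamming distance to J⃗|_Ψ among
all rational ballots on Ψ. -/
def kemenyOn (psi : (Fin n → Bool) → (Fin m → Bool) → Bool)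
    (Ψ : Finset (Issue n m)) (r : ↥Ψ → Bool) : Prop :=
  rationalOn psi Ψ r ∧ ∀ r' : ↥Ψ → Bool, rationalOn psi Ψ r' → DistOn Ψ r ≤ DistOn Ψ r'

/-- Indicator of membership in the initial subagenda Φ': all issues except the
x- and x'-issues. -/
def inPhi' : Issue n m → Bool := fun i => match i with
  | .x _ => false
  | .x' _ => false
  | _ => true

/-- The initial subagenda Φ'. -/
def Phi' (n m : ℕ) : Finset (Issue n m) :=
  Finset.univ.filter (fun i => inPhi' i = true)

theorem b_mem_Phi' : (Issue.b : Issue n m) ∈ Phi' n m :=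
  Finset.mem_filter.mpr ⟨Finset.mem_univ _, rfl⟩

/-- Indicator of membership in the subagenda Φ''_α: Φ' together with the issues x_i
with α(x_i) = true and the issues x'_i with α(x_i) = false. -/
def inPhiA (α : Fin n → Bool) : Issue n m → Bool := fun i => match i with
  | .x j => α j
  | .x' j => !(α j)
  | _ => true

/-- The subagenda Φ''_α. -/
def PhiA (α : Fin n → Bool) : Finset (Issue n m) :=
  Finset.univ.filter (fun i => inPhiA α i = true)

/-- The ballot J*_{α,β} on Φ''_α: the included x-issues true, y_j ↦ β(y_j),
y'_j ↦ ¬β(y_j), a true, every other issue of Φ''_α false. -/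
def JstarAB (α : Fin n → Bool) (β : Fin m → Bool) : ↥(PhiA (m := m) α) → Bool :=
  fun i => match i.1 with
  | .x _ => true
  | .x' _ => true
  | .y j => β j
  | .y' j => !(β j)
  | .a => true
  | _ => false

end Ctrl

/-!
Counting voters per issue instead of issues per voter, the distance of a ballot to the profile is
the sum over the subagenda of the number of voters who disagree with it. For `J*_{α,β}` every pair
`y_j, y'_j` contributes `3`, because the voters reject both issues and the ballot accepts exactly
one; `a` contributes `2`, because only `J₃` accepts it; and each `u_{i,ℓ}` contributes `1`, because
only `J_i` accepts it. On the remaining issues the voters are unanimous and agree with `J*_{α,β}`.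

For rationality, extend `J*_{α,β}` by `x_i ↦ α(x_i)` and `x'_i ↦ ¬α(x_i)`: the implication in `Γ₀`
then holds through its first disjunct, which is where `ψ[α∪β]` being false enters.
-/

namespace Ctrl

open Finset

variable {n m : ℕ}

theorem sum_issue {M : Type*} [AddCommMonoid M] (f : Issue n m → M) :
    ∑ i, f i = ∑ i, (f (.x i) + f (.x' i)) + ∑ j, (f (.y j) + f (.y' j)) + ∑ j, f (.t j) +
      f .a + f .b + ∑ k, ∑ l, f (.u k l) :=
  -- `Issue.proxyTypeEquiv`, from `deriving Fintype`, makes `Issue` a sum with one summand per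
  -- constructor.
  calc ∑ i, f i = ∑ s, f (Issue.proxyTypeEquiv n m s) :=
        ((Issue.proxyTypeEquiv n m).sum_comp f).symm
    _ = ∑ i, f (.x i) + (∑ i, f (.x' i) + (∑ j, f (.y j) + (∑ j, f (.y' j) + (∑ j, f (.t j) +
          (f .a + (f .b + ∑ k, ∑ l, f (.u k l))))))) := by
        simp only [Fintype.sum_sum_type, Fintype.sum_sigma, Fintype.sum_unique]
        rfl
    _ = _ := by simp only [sum_add_distrib, add_assoc]

theorem sum_PhiA {M : Type*} [AddCommMonoid M] (α : Fin n → Bool) (f : Issue n m → M) :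
    ∑ i ∈ PhiA α, f i = ∑ i, f (if α i then .x i else .x' i) + ∑ j, (f (.y j) + f (.y' j)) +
      ∑ j, f (.t j) + f .a + f .b + ∑ k, ∑ l, f (.u k l) := by
  have x_or_x' (i : Fin n) :
      (if inPhiA (m := m) α (.x i) then f (.x i) else 0) +
        (if inPhiA (m := m) α (.x' i) then f (.x' i) else 0) =
          f (if α i then .x i else .x' i) := by
    cases h : α i <;> simp [inPhiA, h]
  rw [PhiA, sum_filter, sum_issue]
  simp only [x_or_x']
  rfl

theorem hamming_restrict (Ψ : Finset (Issue n m)) (r s : Issue n m → Bool) :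
    hamming (restrict Ψ r) (restrict Ψ s) = ∑ i ∈ Ψ, if r i ≠ s i then 1 else 0 := by
  rw [hamming, card_filter]
  exact sum_coe_sort Ψ fun i => if r i ≠ s i then 1 else 0

/-- The number of voters `k` whose ballot `J_k` disagrees with the full ballot `r` on the issue
`i`: the contribution of `i` to the cumulative Hamming distance. -/
def dissent (r : Issue n m → Bool) (i : Issue n m) : ℕ :=
  #{k | r i ≠ Jp k i}

theorem DistOn_restrict (Ψ : Finset (Issue n m)) (r : Issue n m → Bool) :
    DistOn Ψ (restrict Ψ r) = ∑ i ∈ Ψ, dissent r i := by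
  simp only [DistOn, hamming_restrict, dissent, card_filter, Fin.sum_univ_three, sum_add_distrib]

section Dissent

variable {r : Issue n m → Bool}

theorem dissent_eq_zero {i : Issue n m} (h : ∀ k, Jp k i = r i) : dissent r i = 0 := by
  simp [dissent, h]

theorem dissent_y_add_dissent_y' {j : Fin m} (h : r (.y j) ≠ r (.y' j)) :
    dissent r (.y j) + dissent r (.y' j) = 3 := by
  cases hy : r (.y j) <;> cases hy' : r (.y' j) <;> simp_all [dissent, Jp]

theorem dissent_a (h : r .a = true) : dissent r .a = 2 := by
  simp only [dissent, h, Jp]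
  rfl

theorem dissent_u {k : Fin 3} {l : Fin (10 * n + 10 * m + 10)} (h : r (.u k l) = false) :
    dissent r (.u k l) = 1 := by
  simp [dissent, h, Jp, filter_eq]

end Dissent

/-- The extension of `J*_{α,β}` to all issues that reads off `α` on the x-issues: `x_i ↦ α(x_i)`
and `x'_i ↦ ¬α(x_i)`. -/
def extAB (α : Fin n → Bool) (β : Fin m → Bool) : Issue n m → Bool
  | .x i => α i
  | .x' i => !(α i)
  | .y j => β j
  | .y' j => !(β j)
  | .a => true
  | _ => false

theorem restrict_extAB (α : Fin n → Bool) (β : Fin m → Bool) :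
    restrict (PhiA α) (extAB α β) = JstarAB α β := by
  funext ⟨i, hi⟩
  have included : inPhiA α i = true := (mem_filter.mp hi).2
  cases i with
  | x | x' => exact included
  | _ => rfl

theorem bigB_extAB (α : Fin n → Bool) (β : Fin m → Bool) : bigB (extAB α β) := fun j =>
  (Bool.not_ne_self (β j)).symm

theorem gamma0_extAB {psi : (Fin n → Bool) → (Fin m → Bool) → Bool} {α : Fin n → Bool}
    {β : Fin m → Bool} (hfalse : psi α β = false) : gamma0 psi (extAB α β) :=
  ⟨.inl rfl, .inr rfl, .inl (bigB_extAB α β), fun _ => .inl ⟨bigB_extAB α β, rfl, hfalse⟩⟩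

theorem rationalOn_JstarAB {psi : (Fin n → Bool) → (Fin m → Bool) → Bool} {α : Fin n → Bool}
    {β : Fin m → Bool} (hfalse : psi α β = false) : rationalOn psi (PhiA α) (JstarAB α β) :=
  ⟨extAB α β, congrFun (restrict_extAB α β), .inl (gamma0_extAB hfalse)⟩

theorem DistOn_JstarAB (α : Fin n → Bool) (β : Fin m → Bool) :
    DistOn (PhiA α) (JstarAB α β) = 3 * m + 2 + 3 * (10 * n + 10 * m + 10) := by
  have on_x (i : Fin n) : dissent (extAB α β) (if α i then .x i else .x' i) = 0 :=
    dissent_eq_zero fun k => by cases h : α i <;> simp [extAB, Jp, h]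
  have on_y (j : Fin m) : dissent (extAB α β) (.y j) + dissent (extAB α β) (.y' j) = 3 :=
    dissent_y_add_dissent_y' (bigB_extAB α β j)
  have on_t (j : Fin m) : dissent (extAB α β) (.t j) = 0 := dissent_eq_zero fun _ => rfl
  have on_a : dissent (extAB α β) .a = 2 := dissent_a rfl
  have on_b : dissent (extAB α β) .b = 0 := dissent_eq_zero fun _ => rfl
  have on_u (k : Fin 3) (l : Fin (10 * n + 10 * m + 10)) : dissent (extAB α β) (.u k l) = 1 :=
    dissent_u rfl
  rw [← restrict_extAB, DistOn_restrict, sum_PhiA]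
  simp only [on_x, on_y, on_t, on_a, on_b, on_u, sum_const, card_univ, Fintype.card_fin,
    smul_eq_mul]
  ring

end Ctrl

open Ctrl in
/-- for every α : X → Bool and β : Y → Bool, if ψ[α∪β] is false then
the ballot J*_{α,β} on Φ''_α is rational and has cumulative Hamming distance
3m + 2 + 3u to the restricted profile J⃗|_{Φ''_α}. -/
theorem ctrl_JstarAB (n m : ℕ) (hn : 0 < n) (hm : 0 < m)
    (psi : (Fin n → Bool) → (Fin m → Bool) → Bool)
    (α : Fin n → Bool) (β : Fin m → Bool)
    (hfalse : psi α β = false) :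
    rationalOn psi (PhiA α) (JstarAB (m := m) α β) ∧
    DistOn (PhiA α) (JstarAB (m := m) α β)
      = 3 * m + 2 + 3 * (10 * n + 10 * m + 10) := by
  exact ⟨rationalOn_JstarAB hfalse, DistOn_JstarAB α β⟩
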